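/- For every natural number n ≥ 1 and every complex number z with Re z > n, Kurepa's function satisfies K(z) = K(z − n) + R_n(z) · Γ(z + 1), where R_n(z) = Σ_{j=0}^{n−1} Π_{i=0}^{j} 1/(z − i) and Γ is the complex Gamma function. -/

import Mathlib

open MeasureTheory Set

/-- Kurepa's function `K(z) = ∫₀^∞ e^{-t} (t^z - 1)/(t - 1) dt`,
where `t^z = exp(z log t)` for `t > 0`. -/
noncomputable def kurepa (z : ℂ) : ℂ :=
  ∫ t in Ioi (0 : ℝ), (Real.exp (-t) : ℂ) * (((t : ℂ) ^ z - 1) / ((t : ℂ) - 1))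

/-- The rational function `R n z = ∑_{j=0}^{n-1} ∏_{i=0}^{j} 1/(z-i)`. -/
noncomputable def kurepaR (n : ℕ) (z : ℂ) : ℂ :=
  ∑ j ∈ Finset.range n, ∏ i ∈ Finset.range (j + 1), (1 / (z - (i : ℂ)))

theorem kurepa_integrable (w : ℂ) (hw : 0 < w.re) :
    IntegrableOn (fun t : ℝ => (Real.exp (-t) : ℂ) * (((t : ℂ) ^ w - 1) / ((t : ℂ) - 1)))
      (Ioi (0 : ℝ)) := by
  have hmeas : Measurable (fun t : ℝ =>
      (Real.exp (-t) : ℂ) * (((t : ℂ) ^ w - 1) / ((t : ℂ) - 1))) := by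
    fun_prop
  have h1 : IntegrableOn (fun t : ℝ => (Real.exp (-t) : ℂ) *
      (((t : ℂ) ^ w - 1) / ((t : ℂ) - 1))) (Icc (1/2 : ℝ) 2) := by
    have hc : ContinuousOn (fun t : ℝ => (t : ℂ) ^ w) (Icc (1/2 : ℝ) 2) := by
      intro t ht
      have ht0 : t ≠ 0 := by have := ht.1; intro h; subst h; norm_num at this
      exact (Complex.continuousAt_ofReal_cpow_const t w (Or.inl hw)).continuousWithinAt
    have hd : DifferentiableAt ℝ (fun t : ℝ => (t : ℂ) ^ w) 1 := by
      have h0 : DifferentiableAt ℂ (fun x : ℂ => x ^ w) ((1 : ℝ) : ℂ) := by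
        apply DifferentiableAt.cpow_const differentiableAt_id
        simp
      exact h0.hasDerivAt.comp_ofReal.differentiableAt
    have hds : ContinuousOn (dslope (fun t : ℝ => (t : ℂ) ^ w) 1) (Icc (1/2 : ℝ) 2) :=
      (continuousOn_dslope (Icc_mem_nhds (by norm_num) (by norm_num))).2 ⟨hc, hd⟩
    have hg : ContinuousOn (fun t : ℝ => (Real.exp (-t) : ℂ) *
        dslope (fun t : ℝ => (t : ℂ) ^ w) 1 t) (Icc (1/2 : ℝ) 2) :=
      ContinuousOn.mul (by fun_prop) hds
    have hgi := hg.integrableOn_Icc (μ := volume)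
    refine Integrable.congr hgi ?_
    apply ae_restrict_of_ae
    have : ∀ᵐ t : ℝ, t ≠ 1 := by simp [ae_iff]
    filter_upwards [this] with t ht
    rw [dslope_of_ne _ ht, slope_def_module]
    simp [Complex.real_smul, div_eq_inv_mul]
  have hG : IntegrableOn (fun t : ℝ => 2 * (Real.exp (-t) * t ^ w.re + Real.exp (-t)))
      (Ioi (0:ℝ)) := by
    have := Real.GammaIntegral_convergent (s := w.re + 1) (by linarith)
    simp only [add_sub_cancel_right] at this
    exact (this.add (integrableOn_exp_neg_Ioi 0)).const_mul 2
  have h2 : IntegrableOn (fun t : ℝ => (Real.exp (-t) : ℂ) *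
      (((t : ℂ) ^ w - 1) / ((t : ℂ) - 1))) (Ioi 0 \ Icc (1/2 : ℝ) 2) := by
    refine Integrable.mono' (hG.mono_set diff_subset) hmeas.aestronglyMeasurable ?_
    filter_upwards [ae_restrict_mem (measurableSet_Ioi.diff measurableSet_Icc)] with t ht
    have ht0 : 0 < t := ht.1
    have hab : 1/2 ≤ |t - 1| := by
      by_contra! h
      rw [abs_lt] at h
      exact ht.2 ⟨by linarith, by linarith⟩
    have e1 : ‖(t : ℂ) - 1‖ = |t - 1| := by
      rw [← Complex.ofReal_one, ← Complex.ofReal_sub, Complex.norm_real, Real.norm_eq_abs]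
    have e2 : ‖(t : ℂ) ^ w - 1‖ ≤ t ^ w.re + 1 := by
      refine (norm_sub_le _ _).trans ?_
      rw [Complex.norm_cpow_eq_rpow_re_of_pos ht0]; simp
    rw [norm_mul, norm_div, e1, Complex.norm_real, Real.norm_eq_abs, abs_of_pos (Real.exp_pos _)]
    have : ‖(t : ℂ) ^ w - 1‖ / |t - 1| ≤ 2 * (t ^ w.re + 1) := by
      rw [div_le_iff₀ (by linarith)]
      have : 0 ≤ t ^ w.re := by positivity
      nlinarith
    calc _ ≤ Real.exp (-t) * (2 * (t ^ w.re + 1)) := by gcongr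
      _ = _ := by ring
  refine (h2.union h1).mono_set ?_
  intro t ht
  by_cases h : t ∈ Icc (1/2 : ℝ) 2
  · exact Or.inr h
  · exact Or.inl ⟨ht, h⟩

theorem kurepa_step (w : ℂ) (hw : 1 < w.re) :
    kurepa w = kurepa (w - 1) + Complex.Gamma w := by
  have i1 := kurepa_integrable w (by linarith)
  have i2 := kurepa_integrable (w - 1) (by simp; linarith)
  rw [← sub_eq_iff_eq_add', Complex.Gamma_eq_integral (by linarith), Complex.GammaIntegral,
    kurepa, kurepa, ← integral_sub i1 i2]
  apply integral_congr_ae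
  have : ∀ᵐ t : ℝ ∂(volume.restrict (Ioi 0)), t ≠ 1 :=
    ae_restrict_of_ae (by simp [ae_iff])
  filter_upwards [this, ae_restrict_mem measurableSet_Ioi] with t ht ht0
  have h0 : (t : ℂ) ≠ 0 := by exact_mod_cast (ne_of_gt ht0)
  have h1 : (t : ℂ) - 1 ≠ 0 := by
    rw [sub_ne_zero]; exact_mod_cast ht
  have h2 : (t : ℂ) ^ w = t * (t : ℂ) ^ (w - 1) := by
    rw [Complex.cpow_sub _ _ h0, Complex.cpow_one]; field_simp
  rw [h2]
  push_cast
  field_simp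
  ring

theorem kurepa_gamma_prod (j : ℕ) (z : ℂ) (hz : (j : ℝ) < z.re) :
    (∏ i ∈ Finset.range (j + 1), (1 / (z - (i : ℂ)))) * Complex.Gamma (z + 1)
      = Complex.Gamma (z - j) := by
  induction j with
  | zero =>
    have : z ≠ 0 := by rintro rfl; simp at hz
    rw [Complex.Gamma_add_one _ this]
    simp; field_simp
  | succ j ih =>
    push_cast at hz
    rw [Finset.prod_range_succ, mul_right_comm, ih (by linarith)]
    have hne : z - ((j + 1 : ℕ) : ℂ) ≠ 0 := by
      intro h
      have := congrArg Complex.re h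
      simp at this
      linarith
    have : z - (j : ℂ) = (z - ((j + 1 : ℕ) : ℂ)) + 1 := by push_cast; ring
    rw [this, Complex.Gamma_add_one _ hne]
    field_simp

theorem kurepa_aux (n : ℕ) (z : ℂ) (hz : (n : ℝ) < z.re) :
    kurepa z = kurepa (z - n) + kurepaR n z * Complex.Gamma (z + 1) := by
  induction n with
  | zero => simp [kurepaR]
  | succ n ih =>
    push_cast at hz
    rw [ih (by linarith), kurepaR, kurepaR, Finset.sum_range_succ, add_mul,
      kurepa_gamma_prod n z (by linarith), kurepa_step (z - n) (by simp; linarith)]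
    have : z - (n : ℂ) - 1 = z - ((n + 1 : ℕ) : ℂ) := by push_cast; ring
    rw [this]
    ring

/-- For `n ≥ 1` and `Re z > n`, Kurepa's function satisfies
`K(z) = K(z - n) + R_n(z) Γ(z + 1)`. -/
theorem kurepa_eq_kurepa_sub_nat_add_R_mul_Gamma
    (n : ℕ) (hn : 1 ≤ n) (z : ℂ) (hz : (n : ℝ) < z.re) :
    kurepa z = kurepa (z - n) + kurepaR n z * Complex.Gamma (z + 1) :=
  kurepa_aux n z hz
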